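/- arXiv:1310.2108 — 2 statements merged into one kernel-verified Lean document; each statement's English description precedes it below -/
import Mathlib

section
/- Let T, E₁, E₂ : ℝ × ℝ → ℝ³ and k₁, k₂ : ℝ × ℝ → ℝ be smooth with (T, E₁, E₂) pairwise ⟨·,·⟩_L-orthogonal, ⟨T,T⟩_L = −1, ⟨E₁,E₁⟩_L = ⟨E₂,E₂⟩_L = 1, satisfying Tₛ = k₁E₁ + k₂E₂, (E₁)ₛ = k₁T, (E₂)ₛ = k₂T and T_t = −(k₂)ₛE₁ + (k₁)ₛE₂, (E₁)_t = −(k₂)ₛT + ½(k₁² + k₂²)E₂, (E₂)_t = (k₁)ₛT − ½(k₁² + k₂²)E₁. Then the principal curvatures evolve according to (k₁)_t = −(k₂)ₛₛ + ½(k₁² + k₂²)k₂ and (k₂)_t = (k₁)ₛₛ − ½(k₁² + k₂²)k₁. -/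
noncomputable section

open Real

/-- Minkowski 3-space: ℝ³ as a vector type. -/
abbrev V3 : Type := Fin 3 → ℝ

/-- Lorentzian inner product ⟨x,y⟩_L = −x₁y₁ + x₂y₂ + x₃y₃ on ℝ³. -/
def lor (x y : V3) : ℝ := -(x 0 * y 0) + x 1 * y 1 + x 2 * y 2

/-- Lorentzian cross product x ×_L y = (x₃y₂ − x₂y₃, x₃y₁ − x₁y₃, x₁y₂ − x₂y₁). -/
def lcross (x y : V3) : V3 :=
  ![x 2 * y 1 - x 1 * y 2, x 2 * y 0 - x 0 * y 2, x 0 * y 1 - x 1 * y 0]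

/-- Partial derivative with respect to the first variable `s`. -/
def pds {E : Type*} [NormedAddCommGroup E] [NormedSpace ℝ E]
    (f : ℝ × ℝ → E) (p : ℝ × ℝ) : E := deriv (fun s => f (s, p.2)) p.1

/-- Partial derivative with respect to the second variable `t`. -/
def pdt {E : Type*} [NormedAddCommGroup E] [NormedSpace ℝ E]
    (f : ℝ × ℝ → E) (p : ℝ × ℝ) : E := deriv (fun t => f (p.1, t)) p.2

/-!
The evolution equations are the zero-curvature condition of the frame equations: they come from
equating the mixed partials `(E₁)ₛₜ = (E₁)ₜₛ` and `(E₂)ₛₜ = (E₂)ₜₛ`. The components along the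
normal vectors `E₁`, `E₂` cancel because `u = ½(k₁² + k₂²)` satisfies `uₛ = k₁(k₁)ₛ + k₂(k₂)ₛ`, and
the components along `T`, which is nonzero because it is timelike, are the two equations.
-/

section PartialDerivatives

variable {V : Type*} [NormedAddCommGroup V] [NormedSpace ℝ V]
  {f g : ℝ × ℝ → V} {c : ℝ × ℝ → ℝ} {p : ℝ × ℝ}

lemma hasDerivAt_slice_fst (hf : DifferentiableAt ℝ f p) :
    HasDerivAt (fun s => f (s, p.2)) (fderiv ℝ f p (1, 0)) p.1 :=
  hf.hasFDerivAt.comp_hasDerivAt (f := fun s : ℝ => (s, p.2)) p.1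
    ((hasDerivAt_id p.1).prodMk (hasDerivAt_const p.1 p.2))

lemma hasDerivAt_slice_snd (hf : DifferentiableAt ℝ f p) :
    HasDerivAt (fun t => f (p.1, t)) (fderiv ℝ f p (0, 1)) p.2 :=
  hf.hasFDerivAt.comp_hasDerivAt (f := fun t : ℝ => (p.1, t)) p.2
    ((hasDerivAt_const p.2 p.1).prodMk (hasDerivAt_id p.2))

lemma pds_eq_fderiv (hf : Differentiable ℝ f) : pds f = fun q => fderiv ℝ f q (1, 0) :=
  funext fun q => (hasDerivAt_slice_fst (hf q)).deriv

lemma pdt_eq_fderiv (hf : Differentiable ℝ f) : pdt f = fun q => fderiv ℝ f q (0, 1) :=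
  funext fun q => (hasDerivAt_slice_snd (hf q)).deriv

lemma pds_neg (f : ℝ × ℝ → V) (p : ℝ × ℝ) : pds (fun q => -f q) p = -pds f p :=
  deriv.fun_neg

lemma pds_add (hf : DifferentiableAt ℝ f p) (hg : DifferentiableAt ℝ g p) :
    pds (fun q => f q + g q) p = pds f p + pds g p :=
  deriv_fun_add (hasDerivAt_slice_fst hf).differentiableAt
    (hasDerivAt_slice_fst hg).differentiableAt

lemma pds_smul (hc : DifferentiableAt ℝ c p) (hf : DifferentiableAt ℝ f p) :
    pds (fun q => c q • f q) p = c p • pds f p + pds c p • f p :=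
  deriv_fun_smul (hasDerivAt_slice_fst hc).differentiableAt
    (hasDerivAt_slice_fst hf).differentiableAt

lemma pdt_smul (hc : DifferentiableAt ℝ c p) (hf : DifferentiableAt ℝ f p) :
    pdt (fun q => c q • f q) p = c p • pdt f p + pdt c p • f p :=
  deriv_fun_smul (hasDerivAt_slice_snd hc).differentiableAt
    (hasDerivAt_slice_snd hf).differentiableAt

lemma pds_half_sq_add_sq {a b : ℝ × ℝ → ℝ} (ha : DifferentiableAt ℝ a p)
    (hb : DifferentiableAt ℝ b p) :
    pds (fun q => (a q ^ 2 + b q ^ 2) / 2) p = a p * pds a p + b p * pds b p := by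
  have ha' := (hasDerivAt_slice_fst ha).differentiableAt.hasDerivAt
  have hb' := (hasDerivAt_slice_fst hb).differentiableAt.hasDerivAt
  refine (((ha'.pow 2).add (hb'.pow 2)).div_const 2).deriv.trans ?_
  simp only [pds]
  ring

lemma differentiable_fderiv_of_contDiff_two {W : Type*} [NormedAddCommGroup W] [NormedSpace ℝ W]
    {h : W → V} (hh : ContDiff ℝ 2 h) : Differentiable ℝ (fderiv ℝ h) :=
  (hh.fderiv_right (m := 1) (by norm_num)).differentiable one_ne_zero

lemma differentiable_pds (hf : ContDiff ℝ 2 f) : Differentiable ℝ (pds f) := by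
  rw [pds_eq_fderiv (hf.differentiable two_ne_zero)]
  exact (differentiable_fderiv_of_contDiff_two hf).clm_apply (differentiable_const _)

lemma differentiable_pdt (hf : ContDiff ℝ 2 f) : Differentiable ℝ (pdt f) := by
  rw [pdt_eq_fderiv (hf.differentiable two_ne_zero)]
  exact (differentiable_fderiv_of_contDiff_two hf).clm_apply (differentiable_const _)

lemma pdt_pds_comm (hf : ContDiff ℝ 2 f) (p : ℝ × ℝ) : pdt (pds f) p = pds (pdt f) p := by
  have fderiv_apply (v w : ℝ × ℝ) :
      fderiv ℝ (fun q => fderiv ℝ f q v) p w = fderiv ℝ (fderiv ℝ f) p w v := by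
    simp [fderiv_clm_apply (differentiable_fderiv_of_contDiff_two hf p) (differentiableAt_const v)]
  have hsymm : IsSymmSndFDerivAt ℝ f p := hf.contDiffAt.isSymmSndFDerivAt (by simp)
  have hdiff := hf.differentiable two_ne_zero
  rw [pdt_eq_fderiv (differentiable_pds hf), pds_eq_fderiv (differentiable_pdt hf),
    pds_eq_fderiv hdiff, pdt_eq_fderiv hdiff]
  exact (fderiv_apply _ _).trans ((hsymm _ _).trans (fderiv_apply _ _).symm)

end PartialDerivatives

section Frame

variable {V : Type*} [NormedAddCommGroup V] [NormedSpace ℝ V]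

lemma pdt_eq_of_frame_equations {T E F : ℝ × ℝ → V} {k a u : ℝ × ℝ → ℝ} {l b : ℝ} {p : ℝ × ℝ}
    (hT : DifferentiableAt ℝ T p) (hE : ContDiff ℝ 2 E) (hF : DifferentiableAt ℝ F p)
    (hk : DifferentiableAt ℝ k p) (ha : DifferentiableAt ℝ a p) (hu : DifferentiableAt ℝ u p)
    (hT₀ : T p ≠ 0)
    (hEs : ∀ q, pds E q = k q • T q) (hEt : ∀ q, pdt E q = a q • T q + u q • F q)
    (hTs : pds T p = k p • E p + l • F p) (hTt : pdt T p = a p • E p + b • F p)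
    (hFs : pds F p = l • T p) (hus : pds u p = k p * b - a p * l) :
    pdt k p = pds a p + u p * l := by
  have hst : pdt (pds E) p = k p • (a p • E p + b • F p) + pdt k p • T p := by
    rw [funext hEs, pdt_smul hk hT, hTt]
  have hts : pds (pdt E) p = (a p • (k p • E p + l • F p) + pds a p • T p) +
      (u p • l • T p + (k p * b - a p * l) • F p) := by
    rw [funext hEt, pds_add (ha.fun_smul hT) (hu.fun_smul hF), pds_smul ha hT, pds_smul hu hF,
      hTs, hFs, hus]
  have hcomp : pdt k p • T p = (pds a p + u p * l) • T p := by
    linear_combination (norm := module) hts - hst + pdt_pds_comm hE p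
  exact smul_left_injective ℝ hT₀ hcomp

theorem statement7_general {T E₁ E₂ : ℝ × ℝ → V} {k₁ k₂ : ℝ × ℝ → ℝ}
    (hT : Differentiable ℝ T) (hE₁ : ContDiff ℝ 2 E₁) (hE₂ : ContDiff ℝ 2 E₂)
    (hk₁ : ContDiff ℝ 2 k₁) (hk₂ : ContDiff ℝ 2 k₂) (hT₀ : ∀ p, T p ≠ 0)
    (hTs : ∀ p, pds T p = k₁ p • E₁ p + k₂ p • E₂ p)
    (hE₁s : ∀ p, pds E₁ p = k₁ p • T p)
    (hE₂s : ∀ p, pds E₂ p = k₂ p • T p)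
    (hTt : ∀ p, pdt T p = -(pds k₂ p) • E₁ p + (pds k₁ p) • E₂ p)
    (hE₁t : ∀ p, pdt E₁ p = -(pds k₂ p) • T p + ((k₁ p ^ 2 + k₂ p ^ 2) / 2) • E₂ p)
    (hE₂t : ∀ p, pdt E₂ p = (pds k₁ p) • T p - ((k₁ p ^ 2 + k₂ p ^ 2) / 2) • E₁ p) :
    (∀ p, pdt k₁ p = -(pds (pds k₂) p) + (k₁ p ^ 2 + k₂ p ^ 2) / 2 * k₂ p) ∧
    (∀ p, pdt k₂ p = pds (pds k₁) p - (k₁ p ^ 2 + k₂ p ^ 2) / 2 * k₁ p) := by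
  have dE₁ := hE₁.differentiable two_ne_zero
  have dE₂ := hE₂.differentiable two_ne_zero
  have dk₁ := hk₁.differentiable two_ne_zero
  have dk₂ := hk₂.differentiable two_ne_zero
  have hus (p) := pds_half_sq_add_sq (dk₁ p) (dk₂ p)
  constructor <;> intro p
  · rw [← pds_neg]
    refine pdt_eq_of_frame_equations (hT p) hE₁ (dE₂ p) (dk₁ p) (differentiable_pds hk₂ p).fun_neg
      (by fun_prop) (hT₀ p) hE₁s hE₁t (hTs p) (hTt p) (hE₂s p) ?_
    linear_combination hus p
  · rw [sub_eq_add_neg, ← neg_mul]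
    refine pdt_eq_of_frame_equations (u := fun q => -((k₁ q ^ 2 + k₂ q ^ 2) / 2))
      (b := -pds k₂ p) (hT p) hE₂ (dE₁ p) (dk₂ p) (differentiable_pds hk₁ p) (by fun_prop)
      (hT₀ p) hE₂s (fun q => ?_) ?_ ?_ (hE₁s p) ?_
    · rw [hE₂t, neg_smul, sub_eq_add_neg]
    · rw [hTs, add_comm]
    · rw [hTt, add_comm]
    · rw [pds_neg]
      linear_combination -hus p

end Frame

lemma ne_zero_of_lor_self_eq_neg_one {x : V3} (hx : lor x x = -1) : x ≠ 0 := by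
  rintro rfl
  simp [lor] at hx

/-- For a parallel frame `(T,E₁,E₂)` of signature `(−,+,+)` with the
stated `s`- and `t`-evolution equations (with `u = ½(k₁² + k₂²)`), the principal
curvatures evolve by `(k₁)_t = −(k₂)ₛₛ + ½(k₁² + k₂²)k₂` and
`(k₂)_t = (k₁)ₛₛ − ½(k₁² + k₂²)k₁`. -/
theorem statement7 (T E₁ E₂ : ℝ × ℝ → V3) (k₁ k₂ : ℝ × ℝ → ℝ)
    (hT : ContDiff ℝ (⊤ : ℕ∞) T) (hE₁ : ContDiff ℝ (⊤ : ℕ∞) E₁) (hE₂ : ContDiff ℝ (⊤ : ℕ∞) E₂)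
    (hk₁ : ContDiff ℝ (⊤ : ℕ∞) k₁) (hk₂ : ContDiff ℝ (⊤ : ℕ∞) k₂)
    (hTT : ∀ p, lor (T p) (T p) = -1)
    (hE₁E₁ : ∀ p, lor (E₁ p) (E₁ p) = 1)
    (hE₂E₂ : ∀ p, lor (E₂ p) (E₂ p) = 1)
    (hTE₁ : ∀ p, lor (T p) (E₁ p) = 0)
    (hTE₂ : ∀ p, lor (T p) (E₂ p) = 0)
    (hE₁E₂ : ∀ p, lor (E₁ p) (E₂ p) = 0)
    (hTs : ∀ p, pds T p = k₁ p • E₁ p + k₂ p • E₂ p)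
    (hE₁s : ∀ p, pds E₁ p = k₁ p • T p)
    (hE₂s : ∀ p, pds E₂ p = k₂ p • T p)
    (hTt : ∀ p, pdt T p = -(pds k₂ p) • E₁ p + (pds k₁ p) • E₂ p)
    (hE₁t : ∀ p, pdt E₁ p = -(pds k₂ p) • T p + ((k₁ p ^ 2 + k₂ p ^ 2) / 2) • E₂ p)
    (hE₂t : ∀ p, pdt E₂ p = (pds k₁ p) • T p - ((k₁ p ^ 2 + k₂ p ^ 2) / 2) • E₁ p) :
    (∀ p, pdt k₁ p = -(pds (pds k₂) p) + (k₁ p ^ 2 + k₂ p ^ 2) / 2 * k₂ p) ∧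
    (∀ p, pdt k₂ p = pds (pds k₁) p - (k₁ p ^ 2 + k₂ p ^ 2) / 2 * k₁ p) := by
  exact statement7_general (hT.differentiable (by simp)) (contDiff_infty.1 hE₁ 2)
    (contDiff_infty.1 hE₂ 2) (contDiff_infty.1 hk₁ 2) (contDiff_infty.1 hk₂ 2)
    (fun p => ne_zero_of_lor_self_eq_neg_one (hTT p)) hTs hE₁s hE₂s hTt hE₁t hE₂t
end
end

section
/- Let α : ℝ × ℝ → ℝ³ be a smooth solution of the vortex filament equation α_t = α_s ×_L α_ss in Minkowski 3-space such that each curve α(·,t) is a unit-speed spacelike curve with timelike binormal, with smooth Frenet frame (T, N, B) satisfying ⟨T,T⟩_L = ⟨N,N⟩_L = 1, ⟨B,B⟩_L = −1, α_t = κB, and Frenet equations Tₛ = κN, Nₛ = −κT + τB, Bₛ = τN with κ > 0. Then there exist smooth maps E₁, E₂ : ℝ × ℝ → ℝ³ and smooth functions k₁, k₂ : ℝ × ℝ → ℝ such that (T, E₁, E₂) is pairwise ⟨·,·⟩_L-orthogonal with ⟨E₁,E₁⟩_L = 1, ⟨E₂,E₂⟩_L = −1, and Tₛ = k₁E₁ +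 k₂E₂, (E₁)ₛ = −k₁T, (E₂)ₛ = k₂T, and T_t = (k₂)ₛE₁ + (k₁)ₛE₂, (E₁)_t = −(k₂)ₛT − ½(k₁² − k₂²)E₂, (E₂)_t = (k₁)ₛT − ½(k₁² − k₂²)E₁. -/
noncomputable section

open Real

/-!
Since `κ > 0`, the filament equation forces `B = T ×_L N`, so `(T, N, B)` is a Lorentz-orthonormal
frame, and `T_t = (κB)_s = κτN + κ_s B`. Orthonormality then determines `N_t` and `B_t` up to the
single rate `w = ⟨B_t, N⟩_L`, and equality of the mixed derivatives of `B` gives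
`τ_t = w_s + κκ_s`. This is exactly the closedness of the 1-form `-τ ds - (w + κ²/2) dt`, which is
therefore `dθ` for some function `θ`. Rotating `(N, B)` hyperbolically by `θ` adds `θ_s` and `θ_t`
to its rotation rates, which become `0` in `s` and `-κ²/2` in `t`; the curvatures are
`k₁ = κ cosh θ` and `k₂ = -κ sinh θ`.
-/

section PartialDerivatives

open scoped ContDiff

variable {E : Type*} [NormedAddCommGroup E] [NormedSpace ℝ E] {f : ℝ × ℝ → E} {p : ℝ × ℝ}

lemma hasDerivAt_prodMk_right_pds (hf : DifferentiableAt ℝ f p) :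
    HasDerivAt (fun s => f (s, p.2)) (pds f p) p.1 :=
  (hf.comp p.1 (differentiableAt_id.prodMk (differentiableAt_const p.2))).hasDerivAt

lemma hasDerivAt_prodMk_left_pdt (hf : DifferentiableAt ℝ f p) :
    HasDerivAt (fun t => f (p.1, t)) (pdt f p) p.2 :=
  (hf.comp p.2 ((differentiableAt_const p.1).prodMk differentiableAt_id)).hasDerivAt

lemma pds_eq_fderiv_s17 (hf : DifferentiableAt ℝ f p) : pds f p = fderiv ℝ f p (1, 0) :=
  (hf.hasFDerivAt.comp_hasDerivAt p.1
    ((hasDerivAt_id p.1).prodMk (hasDerivAt_const p.1 p.2))).deriv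

lemma pdt_eq_fderiv_s17 (hf : DifferentiableAt ℝ f p) : pdt f p = fderiv ℝ f p (0, 1) :=
  (hf.hasFDerivAt.comp_hasDerivAt p.2
    ((hasDerivAt_const p.2 p.1).prodMk (hasDerivAt_id p.2))).deriv

lemma fderiv_apply_eq_pds_add_pdt (hf : DifferentiableAt ℝ f p) (v : ℝ × ℝ) :
    fderiv ℝ f p v = v.1 • pds f p + v.2 • pdt f p := by
  rw [pds_eq_fderiv_s17 hf, pdt_eq_fderiv_s17 hf, ← map_smul, ← map_smul, ← map_add]
  simp

variable {m n : ℕ∞ω}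

lemma contDiff_pds (hf : ContDiff ℝ n f) (hmn : m + 1 ≤ n) : ContDiff ℝ m (pds f) := by
  have hdiff := hf.differentiable (ne_of_gt (zero_lt_one.trans_le (le_add_self.trans hmn)))
  rw [show pds f = fun q => fderiv ℝ f q (1, 0) from funext fun q => pds_eq_fderiv_s17 (hdiff q)]
  exact (hf.fderiv_right hmn).clm_apply contDiff_const

lemma contDiff_pdt (hf : ContDiff ℝ n f) (hmn : m + 1 ≤ n) : ContDiff ℝ m (pdt f) := by
  have hdiff := hf.differentiable (ne_of_gt (zero_lt_one.trans_le (le_add_self.trans hmn)))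
  rw [show pdt f = fun q => fderiv ℝ f q (0, 1) from funext fun q => pdt_eq_fderiv_s17 (hdiff q)]
  exact (hf.fderiv_right hmn).clm_apply contDiff_const

lemma pds_pdt_comm (hf : ContDiff ℝ 2 f) (p : ℝ × ℝ) : pds (pdt f) p = pdt (pds f) p := by
  have hdiff := hf.differentiable two_ne_zero
  have hdiff' : DifferentiableAt ℝ (fderiv ℝ f) p :=
    (hf.fderiv_right one_add_one_eq_two.le).differentiable one_ne_zero p
  have fderiv_fderiv_apply (v w : ℝ × ℝ) :
      fderiv ℝ (fun q => fderiv ℝ f q v) p w = fderiv ℝ (fderiv ℝ f) p w v := by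
    rw [fderiv_clm_apply hdiff' (differentiableAt_const v)]
    simp
  have hsymm : IsSymmSndFDerivAt ℝ f p := hf.contDiffAt.isSymmSndFDerivAt (by simp)
  rw [pds_eq_fderiv_s17 ((contDiff_pdt hf one_add_one_eq_two.le).differentiable one_ne_zero p),
    pdt_eq_fderiv_s17 ((contDiff_pds hf one_add_one_eq_two.le).differentiable one_ne_zero p),
    show pds f = fun q => fderiv ℝ f q (1, 0) from funext fun q => pds_eq_fderiv_s17 (hdiff q),
    show pdt f = fun q => fderiv ℝ f q (0, 1) from funext fun q => pdt_eq_fderiv_s17 (hdiff q),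
    fderiv_fderiv_apply, fderiv_fderiv_apply, hsymm.eq]

lemma pdt_pds_of_pdt_eq_smul {α B : ℝ × ℝ → E} {κ : ℝ × ℝ → ℝ} (hα : ContDiff ℝ 2 α)
    (hκ : DifferentiableAt ℝ κ p) (hB : DifferentiableAt ℝ B p)
    (hαt : ∀ q, pdt α q = κ q • B q) :
    pdt (pds α) p = κ p • pds B p + pds κ p • B p := by
  rw [← pds_pdt_comm hα, funext hαt]
  exact ((hasDerivAt_prodMk_right_pds hκ).fun_smul (hasDerivAt_prodMk_right_pds hB)).deriv

lemma exists_hasFDerivAt_of_pdt_eq_pds [CompleteSpace E] {a b : ℝ × ℝ → E}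
    (ha : Differentiable ℝ a) (hb : Differentiable ℝ b) (hab : ∀ p, pdt a p = pds b p) :
    ∃ φ : ℝ × ℝ → E, ∀ p, HasFDerivAt φ
      ((ContinuousLinearMap.fst ℝ ℝ ℝ).smulRight (a p) +
        (ContinuousLinearMap.snd ℝ ℝ ℝ).smulRight (b p)) p := by
  set form : ℝ × ℝ → (ℝ × ℝ →L[ℝ] E) := fun p =>
    (ContinuousLinearMap.fst ℝ ℝ ℝ).smulRight (a p) +
      (ContinuousLinearMap.snd ℝ ℝ ℝ).smulRight (b p)
  have hform (p : ℝ × ℝ) : HasFDerivAt form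
      ((ContinuousLinearMap.smulRightL ℝ (ℝ × ℝ) E (.fst ℝ ℝ ℝ)).comp (fderiv ℝ a p) +
        (ContinuousLinearMap.smulRightL ℝ (ℝ × ℝ) E (.snd ℝ ℝ ℝ)).comp (fderiv ℝ b p)) p :=
    ((ContinuousLinearMap.smulRightL ℝ (ℝ × ℝ) E _).hasFDerivAt.comp p (ha p).hasFDerivAt).add
      ((ContinuousLinearMap.smulRightL ℝ (ℝ × ℝ) E _).hasFDerivAt.comp p (hb p).hasFDerivAt)
  have hclosed (p x y : ℝ × ℝ) : fderiv ℝ form p x y = fderiv ℝ form p y x := by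
    simp only [(hform p).fderiv, add_apply, ContinuousLinearMap.comp_apply,
      ContinuousLinearMap.smulRightL_apply_apply, ContinuousLinearMap.smulRight_apply,
      ContinuousLinearMap.coe_fst', ContinuousLinearMap.coe_snd',
      fderiv_apply_eq_pds_add_pdt (ha p), fderiv_apply_eq_pds_add_pdt (hb p), hab]
    module
  obtain ⟨φ, hφ⟩ := convex_univ.exists_forall_hasFDerivAt_of_fderiv_symmetric isOpen_univ
    (fun p _ => (hform p).differentiableAt.differentiableWithinAt) fun p _ => hclosed p
  exact ⟨φ, fun p => hφ p (Set.mem_univ p)⟩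

lemma exists_contDiff_of_pdt_eq_pds [CompleteSpace E] {a b : ℝ × ℝ → E}
    (ha : ContDiff ℝ ∞ a) (hb : ContDiff ℝ ∞ b) (hab : ∀ p, pdt a p = pds b p) :
    ∃ φ : ℝ × ℝ → E, ContDiff ℝ ∞ φ ∧ (∀ p, pds φ p = a p) ∧ ∀ p, pdt φ p = b p := by
  obtain ⟨φ, hφ⟩ := exists_hasFDerivAt_of_pdt_eq_pds (ha.differentiable (by simp))
    (hb.differentiable (by simp)) hab
  have hdiff : Differentiable ℝ φ := fun p => (hφ p).differentiableAt
  refine ⟨φ, contDiff_infty_iff_fderiv.2 ⟨hdiff, ?_⟩, fun p => ?_, fun p => ?_⟩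
  · rw [show fderiv ℝ φ = _ from funext fun p => (hφ p).fderiv]
    fun_prop
  · simp [pds_eq_fderiv_s17 (hdiff p), (hφ p).fderiv]
  · simp [pdt_eq_fderiv_s17 (hdiff p), (hφ p).fderiv]

end PartialDerivatives

section LorentzProduct

open scoped ContDiff

lemma lor_comm (x y : V3) : lor x y = lor y x := by
  simp only [lor]
  ring

lemma lor_add_left (x y z : V3) : lor (x + y) z = lor x z + lor y z := by
  simp only [lor, Pi.add_apply]
  ring

lemma lor_smul_left (c : ℝ) (x y : V3) : lor (c • x) y = c * lor x y := by
  simp only [lor, Pi.smul_apply, smul_eq_mul]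
  ring

lemma lor_add_right (x y z : V3) : lor x (y + z) = lor x y + lor x z := by
  rw [lor_comm, lor_add_left, lor_comm y, lor_comm z]

lemma lor_smul_right (c : ℝ) (x y : V3) : lor x (c • y) = c * lor x y := by
  rw [lor_comm, lor_smul_left, lor_comm]

lemma lor_lcross_left (x y : V3) : lor x (lcross x y) = 0 := by
  simp only [lor, lcross, Matrix.cons_val]
  ring

lemma lor_lcross_right (x y : V3) : lor y (lcross x y) = 0 := by
  simp only [lor, lcross, Matrix.cons_val]
  ring

lemma lcross_smul_right (c : ℝ) (x y : V3) : lcross x (c • y) = c • lcross x y := by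
  ext i
  fin_cases i <;> simp [lcross] <;> ring

lemma contDiff_lor {F : Type*} [NormedAddCommGroup F] [NormedSpace ℝ F] {n : ℕ∞ω}
    {f g : F → V3} (hf : ContDiff ℝ n f) (hg : ContDiff ℝ n g) :
    ContDiff ℝ n fun q => lor (f q) (g q) := by
  unfold lor
  fun_prop

lemma hasDerivAt_lor {u v : ℝ → V3} {u' v' : V3} {r : ℝ} (hu : HasDerivAt u u' r)
    (hv : HasDerivAt v v' r) :
    HasDerivAt (fun r => lor (u r) (v r)) (lor u' (v r) + lor (u r) v') r := by
  have hui := hasDerivAt_pi.1 hu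
  have hvi := hasDerivAt_pi.1 hv
  refine ((((hui 0).mul (hvi 0)).neg.add ((hui 1).mul (hvi 1))).add
    ((hui 2).mul (hvi 2))).congr_deriv ?_
  simp only [lor]
  ring

lemma lor_deriv_add_lor_deriv_eq_zero {u v : ℝ → V3} {u' v' : V3} {r c : ℝ}
    (hu : HasDerivAt u u' r) (hv : HasDerivAt v v' r) (huv : ∀ r, lor (u r) (v r) = c) :
    lor u' (v r) + lor (u r) v' = 0 := by
  have hconst := hasDerivAt_lor hu hv
  rw [funext huv] at hconst
  exact hconst.unique (hasDerivAt_const r c)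

lemma lor_eq_zero_of_pds_eq_smul {T : ℝ × ℝ → V3} {p : ℝ × ℝ} {c k : ℝ} {n : V3}
    (hT : DifferentiableAt ℝ T p) (hTT : ∀ q, lor (T q) (T q) = c) (hTs : pds T p = k • n)
    (hk : k ≠ 0) : lor (T p) n = 0 := by
  have hderiv := hasDerivAt_prodMk_right_pds hT
  have hconst := lor_deriv_add_lor_deriv_eq_zero hderiv hderiv fun s => hTT (s, p.2)
  rw [hTs, lor_comm, lor_smul_right] at hconst
  have hkTn : k * lor (T p) n = 0 := by linarith
  exact (mul_eq_zero.1 hkTn).resolve_left hk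

lemma eq_lcross_of_vortexFilament {α : ℝ × ℝ → V3} {p : ℝ × ℝ} {k : ℝ} {n b : V3}
    (hvfe : pdt α p = lcross (pds α p) (pds (pds α) p)) (hαt : pdt α p = k • b)
    (hαss : pds (pds α) p = k • n) (hk : k ≠ 0) : b = lcross (pds α p) n := by
  rw [hαt, hαss, lcross_smul_right] at hvfe
  exact smul_right_injective V3 hk hvfe

lemma pds_lor_pdt_sub_pdt_lor_pds {f g : ℝ × ℝ → V3} (hf : ContDiff ℝ 2 f)
    (hg : Differentiable ℝ g) (p : ℝ × ℝ) :
    pds (fun q => lor (pdt f q) (g q)) p - pdt (fun q => lor (pds f q) (g q)) p =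
      lor (pdt f p) (pds g p) - lor (pds f p) (pdt g p) := by
  have hft := (contDiff_pdt hf one_add_one_eq_two.le).differentiable one_ne_zero
  have hfs := (contDiff_pds hf one_add_one_eq_two.le).differentiable one_ne_zero
  have hs : pds (fun q => lor (pdt f q) (g q)) p = _ :=
    (hasDerivAt_lor (hasDerivAt_prodMk_right_pds (hft p))
      (hasDerivAt_prodMk_right_pds (hg p))).deriv
  have ht : pdt (fun q => lor (pds f q) (g q)) p = _ :=
    (hasDerivAt_lor (hasDerivAt_prodMk_left_pdt (hfs p))
      (hasDerivAt_prodMk_left_pdt (hg p))).deriv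
  rw [hs, ht, pds_pdt_comm hf]
  ring

end LorentzProduct

/-- A Lorentz-orthonormal triple with spacelike `T`, `N` and timelike `B`. -/
structure IsLorentzFrame (T N B : V3) : Prop where
  TT : lor T T = 1
  NN : lor N N = 1
  BB : lor B B = -1
  TN : lor T N = 0
  TB : lor T B = 0
  NB : lor N B = 0

namespace IsLorentzFrame

-- The expansion says that the matrix with columns `T, N, -B` is a left inverse of the matrix of
-- the functionals `lor T, lor N, lor B`; orthonormality says that it is a right inverse.
lemma eq_expansion {T N B : V3} (h : IsLorentzFrame T N B) (x : V3) :
    x = lor x T • T + lor x N • N - lor x B • B := by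
  obtain ⟨hTT, hNN, hBB, hTN, hTB, hNB⟩ := h
  let P : Matrix (Fin 3) (Fin 3) ℝ := !![-T 0, T 1, T 2; -N 0, N 1, N 2; -B 0, B 1, B 2]
  let Q : Matrix (Fin 3) (Fin 3) ℝ := !![T 0, N 0, -B 0; T 1, N 1, -B 1; T 2, N 2, -B 2]
  have hPQ : P * Q = 1 := by
    simp only [lor] at hTT hNN hBB hTN hTB hNB
    ext i j
    fin_cases i <;> fin_cases j <;>
      simp [P, Q, Matrix.mul_apply, Fin.sum_univ_three] <;> linarith
  have hQPx : Q.mulVec (P.mulVec x) = x := by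
    rw [Matrix.mulVec_mulVec, mul_eq_one_comm.1 hPQ, Matrix.one_mulVec]
  conv_lhs => rw [← hQPx]
  ext i
  fin_cases i <;> simp [P, Q, lor, Matrix.mulVec, dotProduct, Fin.sum_univ_three] <;> ring

section MovingFrame

variable {T N B : ℝ → V3} {T' N' B' : V3} {r : ℝ}

lemma deriv_normal_eq (h : ∀ r, IsLorentzFrame (T r) (N r) (B r)) (hT : HasDerivAt T T' r)
    (hN : HasDerivAt N N' r) (hB : HasDerivAt B B' r) :
    N' = -lor T' (N r) • T r + lor B' (N r) • B r := by
  have hNT := lor_deriv_add_lor_deriv_eq_zero hT hN fun r => (h r).TN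
  have hNN := lor_deriv_add_lor_deriv_eq_zero hN hN fun r => (h r).NN
  have hNB := lor_deriv_add_lor_deriv_eq_zero hN hB fun r => (h r).NB
  rw [lor_comm (T r)] at hNT
  rw [lor_comm (N r)] at hNN hNB
  rw [(h r).eq_expansion N', show lor N' (T r) = -lor T' (N r) by linarith,
    show lor N' (N r) = 0 by linarith, show lor N' (B r) = -lor B' (N r) by linarith]
  module

lemma deriv_binormal_eq (h : ∀ r, IsLorentzFrame (T r) (N r) (B r)) (hT : HasDerivAt T T' r)
    (hB : HasDerivAt B B' r) :
    B' = -lor T' (B r) • T r + lor B' (N r) • N r := by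
  have hBT := lor_deriv_add_lor_deriv_eq_zero hT hB fun r => (h r).TB
  have hBB := lor_deriv_add_lor_deriv_eq_zero hB hB fun r => (h r).BB
  rw [lor_comm (T r)] at hBT
  rw [lor_comm (B r)] at hBB
  conv_lhs => rw [(h r).eq_expansion B', show lor B' (T r) = -lor T' (B r) by linarith,
    show lor B' (B r) = 0 by linarith]
  module

end MovingFrame

end IsLorentzFrame

/-- The first vector of the image of the pair `(x, y)` under the hyperbolic rotation by `θ`;
the second one is `boost θ y x`. -/
def boost {E : Type*} [AddCommGroup E] [Module ℝ E] (θ : ℝ) (x y : E) : E :=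
  cosh θ • x + sinh θ • y

lemma smul_add_smul_eq_smul_boost_add_smul_boost {E : Type*} [AddCommGroup E] [Module ℝ E]
    (θ a b : ℝ) (x y : E) :
    a • x + b • y = (a * cosh θ - b * sinh θ) • boost θ x y +
      (b * cosh θ - a * sinh θ) • boost θ y x := by
  calc a • x + b • y = (cosh θ ^ 2 - sinh θ ^ 2) • (a • x + b • y) := by
        rw [cosh_sq_sub_sinh_sq, one_smul]
    _ = _ := by
        simp only [boost]
        module

section Boost

open scoped ContDiff

variable {E : Type*} [NormedAddCommGroup E] [NormedSpace ℝ E]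

lemma contDiff_boost {F : Type*} [NormedAddCommGroup F] [NormedSpace ℝ F] {n : ℕ∞ω} {θ : F → ℝ}
    {u v : F → E} (hθ : ContDiff ℝ n θ) (hu : ContDiff ℝ n u) (hv : ContDiff ℝ n v) :
    ContDiff ℝ n fun q => boost (θ q) (u q) (v q) :=
  (hθ.cosh.smul hu).add (hθ.sinh.smul hv)

lemma hasDerivAt_boost {θ : ℝ → ℝ} {u v : ℝ → E} {T : E} {θ' a b w r : ℝ}
    (hθ : HasDerivAt θ θ' r) (hu : HasDerivAt u (a • T + w • v r) r)
    (hv : HasDerivAt v (b • T + w • u r) r) :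
    HasDerivAt (fun r => boost (θ r) (u r) (v r))
      ((a * cosh (θ r) + b * sinh (θ r)) • T + (w + θ') • boost (θ r) (v r) (u r)) r := by
  refine ((hθ.cosh.fun_smul hu).fun_add (hθ.sinh.fun_smul hv)).congr_deriv ?_
  simp only [boost]
  module

lemma pds_boost {θ : ℝ × ℝ → ℝ} {u v : ℝ × ℝ → E} {p : ℝ × ℝ} {T : E} {a b w : ℝ}
    (hθ : DifferentiableAt ℝ θ p) (hu : DifferentiableAt ℝ u p) (hv : DifferentiableAt ℝ v p)
    (hus : pds u p = a • T + w • v p) (hvs : pds v p = b • T + w • u p) :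
    pds (fun q => boost (θ q) (u q) (v q)) p =
      (a * cosh (θ p) + b * sinh (θ p)) • T + (w + pds θ p) • boost (θ p) (v p) (u p) :=
  (hasDerivAt_boost (hasDerivAt_prodMk_right_pds hθ) (hus ▸ hasDerivAt_prodMk_right_pds hu)
    (hvs ▸ hasDerivAt_prodMk_right_pds hv)).deriv

lemma pdt_boost {θ : ℝ × ℝ → ℝ} {u v : ℝ × ℝ → E} {p : ℝ × ℝ} {T : E} {a b w : ℝ}
    (hθ : DifferentiableAt ℝ θ p) (hu : DifferentiableAt ℝ u p) (hv : DifferentiableAt ℝ v p)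
    (hut : pdt u p = a • T + w • v p) (hvt : pdt v p = b • T + w • u p) :
    pdt (fun q => boost (θ q) (u q) (v q)) p =
      (a * cosh (θ p) + b * sinh (θ p)) • T + (w + pdt θ p) • boost (θ p) (v p) (u p) :=
  (hasDerivAt_boost (hasDerivAt_prodMk_left_pdt hθ) (hut ▸ hasDerivAt_prodMk_left_pdt hu)
    (hvt ▸ hasDerivAt_prodMk_left_pdt hv)).deriv

end Boost

lemma isLorentzFrame_boost {T N B : V3} (h : IsLorentzFrame T N B) (θ : ℝ) :
    IsLorentzFrame T (boost θ N B) (boost θ B N) := by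
  have hBN : lor B N = 0 := lor_comm N B ▸ h.NB
  constructor <;>
    simp only [boost, lor_add_left, lor_add_right, lor_smul_left, lor_smul_right, h.TT,
      h.NN, h.BB, h.TN, h.TB, h.NB, hBN] <;>
    linarith [cosh_sq_sub_sinh_sq θ]

/-- The Frenet frame, curvature and torsion of a smooth family of unit-speed spacelike curves
`α(·, t)` with timelike binormal moving by the binormal flow `α_t = κB`. The curves enter only
through `T = α_s`, so the flow is recorded as `T_t = (κB)_s`. -/
structure IsBinormalFlowFrame (T N B : ℝ × ℝ → V3) (κ τ : ℝ × ℝ → ℝ) : Prop where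
  contDiff_T : ContDiff ℝ (⊤ : ℕ∞) T
  contDiff_N : ContDiff ℝ (⊤ : ℕ∞) N
  contDiff_B : ContDiff ℝ (⊤ : ℕ∞) B
  contDiff_κ : ContDiff ℝ (⊤ : ℕ∞) κ
  contDiff_τ : ContDiff ℝ (⊤ : ℕ∞) τ
  frame (p) : IsLorentzFrame (T p) (N p) (B p)
  pds_T (p) : pds T p = κ p • N p
  pds_N (p) : pds N p = -(κ p) • T p + τ p • B p
  pds_B (p) : pds B p = τ p • N p
  pdt_T (p) : pdt T p = (κ p * τ p) • N p + pds κ p • B p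

/-- The rate `⟨B_t, N⟩_L` at which the pair `(N, B)` rotates in its plane as time varies. -/
def normalSpin (N B : ℝ × ℝ → V3) (p : ℝ × ℝ) : ℝ := lor (pdt B p) (N p)

/-- An orthonormal frame `(T, E₁, E₂)` whose normal fields are parallel along each curve (their
`s`-derivatives are tangential), with principal curvatures `k₁`, `k₂`, together with its time
evolution under the binormal flow. -/
structure IsParallelFlowFrame (T E₁ E₂ : ℝ × ℝ → V3) (k₁ k₂ : ℝ × ℝ → ℝ) : Prop where
  contDiff_E₁ : ContDiff ℝ (⊤ : ℕ∞) E₁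
  contDiff_E₂ : ContDiff ℝ (⊤ : ℕ∞) E₂
  contDiff_k₁ : ContDiff ℝ (⊤ : ℕ∞) k₁
  contDiff_k₂ : ContDiff ℝ (⊤ : ℕ∞) k₂
  frame (p) : IsLorentzFrame (T p) (E₁ p) (E₂ p)
  pds_T (p) : pds T p = k₁ p • E₁ p + k₂ p • E₂ p
  pds_E₁ (p) : pds E₁ p = -(k₁ p) • T p
  pds_E₂ (p) : pds E₂ p = k₂ p • T p
  pdt_T (p) : pdt T p = pds k₂ p • E₁ p + pds k₁ p • E₂ p
  pdt_E₁ (p) : pdt E₁ p = -(pds k₂ p) • T p - ((k₁ p ^ 2 - k₂ p ^ 2) / 2) • E₂ p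
  pdt_E₂ (p) : pdt E₂ p = pds k₁ p • T p - ((k₁ p ^ 2 - k₂ p ^ 2) / 2) • E₁ p

namespace IsBinormalFlowFrame

variable {T N B : ℝ × ℝ → V3} {κ τ θ : ℝ × ℝ → ℝ} {p : ℝ × ℝ}

lemma differentiable_T (h : IsBinormalFlowFrame T N B κ τ) : Differentiable ℝ T :=
  h.contDiff_T.differentiable (by simp)

lemma differentiable_N (h : IsBinormalFlowFrame T N B κ τ) : Differentiable ℝ N :=
  h.contDiff_N.differentiable (by simp)

lemma differentiable_B (h : IsBinormalFlowFrame T N B κ τ) : Differentiable ℝ B :=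
  h.contDiff_B.differentiable (by simp)

lemma differentiable_κ (h : IsBinormalFlowFrame T N B κ τ) : Differentiable ℝ κ :=
  h.contDiff_κ.differentiable (by simp)

lemma contDiff_normalSpin (h : IsBinormalFlowFrame T N B κ τ) :
    ContDiff ℝ (⊤ : ℕ∞) (normalSpin N B) :=
  contDiff_lor (contDiff_pdt h.contDiff_B (by simp)) h.contDiff_N

lemma pdt_N (h : IsBinormalFlowFrame T N B κ τ) (p : ℝ × ℝ) :
    pdt N p = -(κ p * τ p) • T p + normalSpin N B p • B p := by
  have hBN : lor (B p) (N p) = 0 := lor_comm (N p) (B p) ▸ (h.frame p).NB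
  have hTtN : lor (pdt T p) (N p) = κ p * τ p := by
    rw [h.pdt_T, lor_add_left, lor_smul_left, lor_smul_left, (h.frame p).NN, hBN]
    ring
  rw [← hTtN]
  exact IsLorentzFrame.deriv_normal_eq (fun t => h.frame (p.1, t))
    (hasDerivAt_prodMk_left_pdt (h.differentiable_T p))
    (hasDerivAt_prodMk_left_pdt (h.differentiable_N p))
    (hasDerivAt_prodMk_left_pdt (h.differentiable_B p))

lemma pdt_B (h : IsBinormalFlowFrame T N B κ τ) (p : ℝ × ℝ) :
    pdt B p = pds κ p • T p + normalSpin N B p • N p := by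
  have hTtB : -lor (pdt T p) (B p) = pds κ p := by
    rw [h.pdt_T, lor_add_left, lor_smul_left, lor_smul_left, (h.frame p).NB, (h.frame p).BB]
    ring
  rw [← hTtB]
  exact IsLorentzFrame.deriv_binormal_eq (fun t => h.frame (p.1, t))
    (hasDerivAt_prodMk_left_pdt (h.differentiable_T p))
    (hasDerivAt_prodMk_left_pdt (h.differentiable_B p))

lemma pdt_τ (h : IsBinormalFlowFrame T N B κ τ) (p : ℝ × ℝ) :
    pdt τ p = pds (normalSpin N B) p + κ p * pds κ p := by
  have hτ : (fun q => lor (pds B q) (N q)) = τ := funext fun q => by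
    rw [h.pds_B, lor_smul_left, (h.frame q).NN, mul_one]
  have hNT : lor (N p) (T p) = 0 := lor_comm (T p) (N p) ▸ (h.frame p).TN
  have hcurv : pds (normalSpin N B) p - pdt τ p =
      lor (pdt B p) (pds N p) - lor (pds B p) (pdt N p) :=
    hτ ▸ pds_lor_pdt_sub_pdt_lor_pds (contDiff_infty.1 h.contDiff_B 2) h.differentiable_N p
  simp only [h.pdt_B, h.pdt_N, h.pds_B, h.pds_N, lor_add_left, lor_add_right, lor_smul_left,
    lor_smul_right, (h.frame p).TT, (h.frame p).TB, (h.frame p).NB, hNT] at hcurv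
  linarith

lemma exists_angle (h : IsBinormalFlowFrame T N B κ τ) :
    ∃ θ : ℝ × ℝ → ℝ, ContDiff ℝ (⊤ : ℕ∞) θ ∧ (∀ p, pds θ p = -τ p) ∧
      ∀ p, pdt θ p = -normalSpin N B p - κ p ^ 2 / 2 := by
  refine exists_contDiff_of_pdt_eq_pds h.contDiff_τ.neg
    (h.contDiff_normalSpin.neg.sub ((h.contDiff_κ.pow 2).div_const 2)) fun p => ?_
  have hτt : pdt (fun q => -τ q) p = -pdt τ p :=
    (hasDerivAt_prodMk_left_pdt (h.contDiff_τ.differentiable (by simp) p)).fun_neg.deriv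
  have hangle : pds (fun q => -normalSpin N B q - κ q ^ 2 / 2) p = _ :=
    ((hasDerivAt_prodMk_right_pds
      (h.contDiff_normalSpin.differentiable (by simp) p)).fun_neg.fun_sub
        (((hasDerivAt_prodMk_right_pds (h.differentiable_κ p)).fun_pow 2).div_const 2)).deriv
  rw [hτt, hangle, h.pdt_τ]
  simp only [Nat.cast_ofNat]
  ring

lemma pds_boost_N (h : IsBinormalFlowFrame T N B κ τ) (hθ : DifferentiableAt ℝ θ p)
    (hθs : pds θ p = -τ p) :
    pds (fun q => boost (θ q) (N q) (B q)) p = -(κ p * cosh (θ p)) • T p := by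
  have hBs : pds B p = (0 : ℝ) • T p + τ p • N p := by rw [h.pds_B, zero_smul, zero_add]
  rw [pds_boost hθ (h.differentiable_N p) (h.differentiable_B p) (h.pds_N p) hBs, hθs]
  module

lemma pds_boost_B (h : IsBinormalFlowFrame T N B κ τ) (hθ : DifferentiableAt ℝ θ p)
    (hθs : pds θ p = -τ p) :
    pds (fun q => boost (θ q) (B q) (N q)) p = -(κ p * sinh (θ p)) • T p := by
  have hBs : pds B p = (0 : ℝ) • T p + τ p • N p := by rw [h.pds_B, zero_smul, zero_add]
  rw [pds_boost hθ (h.differentiable_B p) (h.differentiable_N p) hBs (h.pds_N p), hθs]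
  module

lemma pdt_boost_N (h : IsBinormalFlowFrame T N B κ τ) (hθ : DifferentiableAt ℝ θ p)
    (hθt : pdt θ p = -normalSpin N B p - κ p ^ 2 / 2) :
    pdt (fun q => boost (θ q) (N q) (B q)) p =
      (pds κ p * sinh (θ p) - κ p * τ p * cosh (θ p)) • T p
        - (κ p ^ 2 / 2) • boost (θ p) (B p) (N p) := by
  rw [pdt_boost hθ (h.differentiable_N p) (h.differentiable_B p) (h.pdt_N p) (h.pdt_B p), hθt]
  module

lemma pdt_boost_B (h : IsBinormalFlowFrame T N B κ τ) (hθ : DifferentiableAt ℝ θ p)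
    (hθt : pdt θ p = -normalSpin N B p - κ p ^ 2 / 2) :
    pdt (fun q => boost (θ q) (B q) (N q)) p =
      (pds κ p * cosh (θ p) - κ p * τ p * sinh (θ p)) • T p
        - (κ p ^ 2 / 2) • boost (θ p) (N p) (B p) := by
  rw [pdt_boost hθ (h.differentiable_B p) (h.differentiable_N p) (h.pdt_B p) (h.pdt_N p), hθt]
  module

end IsBinormalFlowFrame

section PrincipalCurvatures

variable {κ θ : ℝ × ℝ → ℝ} {p : ℝ × ℝ}

lemma pds_mul_cosh (hκ : DifferentiableAt ℝ κ p) (hθ : DifferentiableAt ℝ θ p) :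
    pds (fun q => κ q * cosh (θ q)) p =
      pds κ p * cosh (θ p) + κ p * (sinh (θ p) * pds θ p) :=
  ((hasDerivAt_prodMk_right_pds hκ).fun_mul (hasDerivAt_prodMk_right_pds hθ).cosh).deriv

lemma pds_neg_mul_sinh (hκ : DifferentiableAt ℝ κ p) (hθ : DifferentiableAt ℝ θ p) :
    pds (fun q => -(κ q * sinh (θ q))) p =
      -(pds κ p * sinh (θ p) + κ p * (cosh (θ p) * pds θ p)) :=
  ((hasDerivAt_prodMk_right_pds hκ).fun_mul (hasDerivAt_prodMk_right_pds hθ).sinh).fun_neg.deriv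

end PrincipalCurvatures

lemma IsBinormalFlowFrame.isParallelFlowFrame_boost {T N B : ℝ × ℝ → V3} {κ τ θ : ℝ × ℝ → ℝ}
    (h : IsBinormalFlowFrame T N B κ τ) (hθ : ContDiff ℝ (⊤ : ℕ∞) θ)
    (hθs : ∀ p, pds θ p = -τ p) (hθt : ∀ p, pdt θ p = -normalSpin N B p - κ p ^ 2 / 2) :
    IsParallelFlowFrame T (fun q => boost (θ q) (N q) (B q)) (fun q => boost (θ q) (B q) (N q))
      (fun q => κ q * cosh (θ q)) (fun q => -(κ q * sinh (θ q))) := by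
  have hθd : Differentiable ℝ θ := hθ.differentiable (by simp)
  have hnorm (p : ℝ × ℝ) : (κ p * cosh (θ p)) ^ 2 - (-(κ p * sinh (θ p))) ^ 2 = κ p ^ 2 := by
    linear_combination κ p ^ 2 * cosh_sq_sub_sinh_sq (θ p)
  constructor
  case contDiff_E₁ => exact contDiff_boost hθ h.contDiff_N h.contDiff_B
  case contDiff_E₂ => exact contDiff_boost hθ h.contDiff_B h.contDiff_N
  case contDiff_k₁ => exact h.contDiff_κ.mul hθ.cosh
  case contDiff_k₂ => exact (h.contDiff_κ.mul hθ.sinh).neg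
  all_goals intro p
  case frame => exact isLorentzFrame_boost (h.frame p) (θ p)
  case pds_T =>
    have hN := smul_add_smul_eq_smul_boost_add_smul_boost (θ p) (κ p) 0 (N p) (B p)
    simpa [h.pds_T] using hN
  case pds_E₁ => exact h.pds_boost_N (hθd p) (hθs p)
  case pds_E₂ => exact h.pds_boost_B (hθd p) (hθs p)
  case pdt_T =>
    rw [h.pdt_T, smul_add_smul_eq_smul_boost_add_smul_boost (θ p),
      pds_mul_cosh (h.differentiable_κ p) (hθd p), pds_neg_mul_sinh (h.differentiable_κ p) (hθd p),
      hθs]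
    module
  case pdt_E₁ =>
    rw [h.pdt_boost_N (hθd p) (hθt p), pds_neg_mul_sinh (h.differentiable_κ p) (hθd p), hθs, hnorm]
    module
  case pdt_E₂ =>
    rw [h.pdt_boost_B (hθd p) (hθt p), pds_mul_cosh (h.differentiable_κ p) (hθd p), hθs, hnorm]
    module

/-- For a smooth solution `α` of the vortex filament equation whose
curves `α(·,t)` are unit-speed spacelike with timelike binormal, with smooth Frenet
frame `(T,N,B)` (`⟨T,T⟩_L = ⟨N,N⟩_L = 1`, `⟨B,B⟩_L = −1`, `α_t = κB`, `Tₛ = κN`,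
`Nₛ = −κT + τB`, `Bₛ = τN`, `κ > 0`), there exists a parallel normal frame
`(T,E₁,E₂)` with `⟨E₁,E₁⟩_L = 1`, `⟨E₂,E₂⟩_L = −1` and principal curvatures
`k₁, k₂` satisfying the stated `s`- and `t`-evolution equations. -/
theorem statement17 (α T N B : ℝ × ℝ → V3) (κ τ : ℝ × ℝ → ℝ)
    (hα : ContDiff ℝ (⊤ : ℕ∞) α) (hT : ContDiff ℝ (⊤ : ℕ∞) T) (hN : ContDiff ℝ (⊤ : ℕ∞) N)
    (hB : ContDiff ℝ (⊤ : ℕ∞) B) (hκ : ContDiff ℝ (⊤ : ℕ∞) κ) (hτ : ContDiff ℝ (⊤ : ℕ∞) τ)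
    (hvfe : ∀ p, pdt α p = lcross (pds α p) (pds (pds α) p))
    (hαs : ∀ p, pds α p = T p)
    (hTT : ∀ p, lor (T p) (T p) = 1)
    (hNN : ∀ p, lor (N p) (N p) = 1)
    (hBB : ∀ p, lor (B p) (B p) = -1)
    (hαt : ∀ p, pdt α p = κ p • B p)
    (hTs : ∀ p, pds T p = κ p • N p)
    (hNs : ∀ p, pds N p = -(κ p) • T p + τ p • B p)
    (hBs : ∀ p, pds B p = τ p • N p)
    (hκpos : ∀ p, 0 < κ p) :
    ∃ E₁ E₂ : ℝ × ℝ → V3, ∃ k₁ k₂ : ℝ × ℝ → ℝ,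
      ContDiff ℝ (⊤ : ℕ∞) E₁ ∧ ContDiff ℝ (⊤ : ℕ∞) E₂ ∧ ContDiff ℝ (⊤ : ℕ∞) k₁ ∧ ContDiff ℝ (⊤ : ℕ∞) k₂ ∧
      (∀ p, lor (E₁ p) (E₁ p) = 1) ∧
      (∀ p, lor (E₂ p) (E₂ p) = -1) ∧
      (∀ p, lor (T p) (E₁ p) = 0) ∧
      (∀ p, lor (T p) (E₂ p) = 0) ∧
      (∀ p, lor (E₁ p) (E₂ p) = 0) ∧
      (∀ p, pds T p = k₁ p • E₁ p + k₂ p • E₂ p) ∧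
      (∀ p, pds E₁ p = -(k₁ p) • T p) ∧
      (∀ p, pds E₂ p = k₂ p • T p) ∧
      (∀ p, pdt T p = (pds k₂ p) • E₁ p + (pds k₁ p) • E₂ p) ∧
      (∀ p, pdt E₁ p = -(pds k₂ p) • T p - ((k₁ p ^ 2 - k₂ p ^ 2) / 2) • E₂ p) ∧
      (∀ p, pdt E₂ p = (pds k₁ p) • T p - ((k₁ p ^ 2 - k₂ p ^ 2) / 2) • E₁ p) := by
  have hTα : T = pds α := (funext hαs).symm
  have hTN (p : ℝ × ℝ) : lor (T p) (N p) = 0 :=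
    lor_eq_zero_of_pds_eq_smul (hT.differentiable (by simp) p) hTT (hTs p) (hκpos p).ne'
  have hBTN (p : ℝ × ℝ) : B p = lcross (T p) (N p) :=
    hTα ▸ eq_lcross_of_vortexFilament (hvfe p) (hαt p) (hTα ▸ hTs p) (hκpos p).ne'
  have hTt (p : ℝ × ℝ) : pdt T p = (κ p * τ p) • N p + pds κ p • B p := by
    rw [hTα, pdt_pds_of_pdt_eq_smul (contDiff_infty.1 hα 2) (hκ.differentiable (by simp) p)
      (hB.differentiable (by simp) p) hαt, hBs, smul_smul]
  have hframe (p : ℝ × ℝ) : IsLorentzFrame (T p) (N p) (B p) :=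
    ⟨hTT p, hNN p, hBB p, hTN p, hBTN p ▸ lor_lcross_left _ _, hBTN p ▸ lor_lcross_right _ _⟩
  have hflow : IsBinormalFlowFrame T N B κ τ :=
    ⟨hT, hN, hB, hκ, hτ, hframe, hTs, hNs, hBs, hTt⟩
  obtain ⟨θ, hθ, hθs, hθt⟩ := hflow.exists_angle
  have hE := hflow.isParallelFlowFrame_boost hθ hθs hθt
  exact ⟨_, _, _, _, hE.contDiff_E₁, hE.contDiff_E₂, hE.contDiff_k₁, hE.contDiff_k₂,
    fun p => (hE.frame p).NN, fun p => (hE.frame p).BB, fun p => (hE.frame p).TN,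
    fun p => (hE.frame p).TB, fun p => (hE.frame p).NB, hE.pds_T, hE.pds_E₁, hE.pds_E₂,
    hE.pdt_T, hE.pdt_E₁, hE.pdt_E₂⟩
end
end
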